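/- Let ν ∈ (0,1/2]. The infimum, over all smooth not identically zero functions u : (0,π) × ℝ → ℂ that are 2π-periodic in the second variable θ and have finite magnetic energy, of the quotient Q[u] = (∫₀^{2π} ∫₀^π (|∂_r u(r,θ)|² + |∂_θ u(r,θ) − iν u(r,θ)|²/sin²(r)) sin(r) dr dθ) / (∫₀^{2π} ∫₀^π |u(r,θ)|² sin(r) dr dθ) equals ν(ν+1), and it is attained by the function u(r,θ) = (sin r)^ν. -/

import Mathlib

open MeasureTheory Real Set Filter

/-- The integrand of the magnetic energy in geodesic polar coordinates `(r, θ)`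
on the round sphere, for the Aharonov–Bohm potential `A = ν dθ`. -/
noncomputable def magEnergyIntegrand (ν : ℝ) (u : ℝ → ℝ → ℂ) (p : ℝ × ℝ) : ℝ :=
  (‖deriv (fun s => u s p.2) p.1‖ ^ 2
      + ‖deriv (fun t => u p.1 t) p.2 - Complex.I * (ν : ℂ) * u p.1 p.2‖ ^ 2
          / Real.sin p.1 ^ 2)
    * Real.sin p.1

/-- Admissible functions on the polar coordinate rectangle `(0, R) × ℝ`:
smooth, `2π`-periodic in `θ`, not identically zero, with finite magnetic energy
(and finite `L²`-norm). -/
def MagAdmissible (R ν : ℝ) (u : ℝ → ℝ → ℂ) : Prop :=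
  ContDiffOn ℝ (⊤ : ℕ∞) (Function.uncurry u) (Ioo 0 R ×ˢ (univ : Set ℝ)) ∧
  (∀ r θ, u r (θ + 2 * π) = u r θ) ∧
  (¬ ∀ r ∈ Ioo (0:ℝ) R, ∀ θ : ℝ, u r θ = 0) ∧
  IntegrableOn (magEnergyIntegrand ν u) (Ioo 0 R ×ˢ Ioo 0 (2 * π)) ∧
  IntegrableOn (fun p : ℝ × ℝ => ‖u p.1 p.2‖ ^ 2 * Real.sin p.1)
    (Ioo 0 R ×ˢ Ioo 0 (2 * π))

/-- The magnetic Rayleigh quotient in polar coordinates. -/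
noncomputable def magQuot (R ν : ℝ) (u : ℝ → ℝ → ℂ) : ℝ :=
  (∫ p in Ioo (0:ℝ) R ×ˢ Ioo (0:ℝ) (2 * π), magEnergyIntegrand ν u p) /
    ∫ p in Ioo (0:ℝ) R ×ˢ Ioo (0:ℝ) (2 * π), ‖u p.1 p.2‖ ^ 2 * Real.sin p.1


lemma fourier_ineq (ν : ℝ) (hν : ν ∈ Ioc (0:ℝ) (1/2)) (f f' : ℝ → ℂ)
    (hf : ∀ x, HasDerivAt f (f' x) x) (hf' : Continuous f') (hper : f (2 * π) = f 0) :
    ν ^ 2 * ∫ t in (0:ℝ)..(2*π), ‖f t‖ ^ 2 ≤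
      ∫ t in (0:ℝ)..(2*π), ‖f' t - Complex.I * (ν : ℂ) * f t‖ ^ 2 := by
  have hfc : Continuous f := continuous_iff_continuousAt.2 fun x => (hf x).continuousAt
  have hab : (0:ℝ) < 2 * π := by positivity
  set g : ℝ → ℂ := fun t => f' t - Complex.I * (ν : ℂ) * f t with hg
  have hgc : Continuous g := by fun_prop
  have hL2 : ∀ h : ℝ → ℂ, Continuous h → MemLp h 2 (volume.restrict (Ioc 0 (2*π))) := by
    intro h hc
    refine (memLp_two_iff_integrable_sq_norm hc.aestronglyMeasurable).2 ?_
    exact (hc.norm.pow 2).integrableOn_Ioc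
  have hF := hasSum_sq_fourierCoeffOn hab (hL2 f hfc)
  have hG := hasSum_sq_fourierCoeffOn hab (hL2 g hgc)
  have hfour : ∀ n : ℤ, Continuous fun x : ℝ => (fourier (-n) (x : AddCircle (2 * π - 0)) : ℂ) :=
    fun n => (map_continuous (fourier (-n))).comp (AddCircle.continuous_mk' _)
  have hcoef : ∀ n : ℤ, fourierCoeffOn hab f' n = Complex.I * n * fourierCoeffOn hab f n := by
    intro n
    by_cases hn : n = 0
    · subst hn
      rw [fourierCoeffOn_eq_integral]
      have : ∫ x in (0:ℝ)..(2*π), f' x = f (2*π) - f 0 :=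
        intervalIntegral.integral_eq_sub_of_hasDerivAt (fun x _ => hf x) (hf'.intervalIntegrable _ _)
      simp [this, hper]
    · have := fourierCoeffOn_of_hasDerivAt hab hn (fun x _ => hf x) (hf'.intervalIntegrable _ _)
      rw [this, hper]
      have h1 : (n:ℂ) ≠ 0 := by exact_mod_cast hn
      have h2 : (π:ℂ) ≠ 0 := by exact_mod_cast Real.pi_ne_zero
      push_cast
      field_simp
      simp only [zero_sub, sub_zero, sub_self, mul_zero, neg_neg, neg_mul, mul_neg]
      ring
  have hcg : ∀ n : ℤ, fourierCoeffOn hab g n = Complex.I * (n - ν) * fourierCoeffOn hab f n := by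
    intro n
    have : fourierCoeffOn hab g n = fourierCoeffOn hab f' n
        - Complex.I * ν * fourierCoeffOn hab f n := by
      simp only [fourierCoeffOn_eq_integral, hg, smul_eq_mul, mul_sub]
      rw [intervalIntegral.integral_sub, smul_sub]
      · congr 1
        rw [mul_smul_comm, ← intervalIntegral.integral_const_mul]
        congr 2
        ext x; ring
      · exact ((hfour n).mul hf').intervalIntegrable _ _
      · exact ((hfour n).mul (by fun_prop)).intervalIntegrable _ _
    rw [this, hcoef]; ring
  have hle : ∀ n : ℤ, ν^2 * ‖fourierCoeffOn hab f n‖ ^ 2 ≤ ‖fourierCoeffOn hab g n‖ ^ 2 := by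
    intro n
    rw [hcg, norm_mul, norm_mul, Complex.norm_I, one_mul, mul_pow]
    apply mul_le_mul_of_nonneg_right _ (sq_nonneg _)
    have : ((n:ℂ) - (ν:ℂ)) = ((n - ν : ℝ) : ℂ) := by push_cast; rfl
    rw [this, Complex.norm_real, Real.norm_eq_abs, sq_abs]
    obtain ⟨h0, h1⟩ := hν
    rcases le_or_gt n 0 with h | h
    · have : (n:ℝ) ≤ 0 := by exact_mod_cast h
      nlinarith
    · have : (1:ℝ) ≤ n := by exact_mod_cast h
      nlinarith
  have := hasSum_le hle (hF.mul_left (ν^2)) hG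
  simp only [smul_eq_mul, sub_zero] at this
  have h3 : (0:ℝ) < (2*π)⁻¹ := by positivity
  nlinarith

lemma end_zero (h : ℝ → ℝ) (L : ℝ) (hL : Tendsto h (nhdsWithin 0 (Ioi 0)) (nhds L))
    (hi : IntervalIntegrable (fun x => h x / Real.sin x) volume 0 π) : L = 0 := by
  by_contra hne
  have hpos : 0 < |L| / 2 := by positivity
  have h1 : ∀ᶠ x in nhdsWithin (0:ℝ) (Ioi 0), |L| / 2 < |h x| :=
    hL.abs.eventually_const_lt (by linarith)
  obtain ⟨d, hd, hd'⟩ := (mem_nhdsGT_iff_exists_Ioo_subset).1 h1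
  set e := min d π
  have he : 0 < e := lt_min hd pi_pos
  have hi2 : IntervalIntegrable (fun x => h x / Real.sin x) volume 0 e :=
    hi.mono_set (by rw [uIcc_of_le he.le, uIcc_of_le pi_pos.le]; exact Icc_subset_Icc_right (min_le_right _ _))
  have : IntervalIntegrable (fun x : ℝ => x⁻¹) volume 0 e := by
    rw [intervalIntegrable_iff_integrableOn_Ioo_of_le he.le] at hi2 ⊢
    refine Integrable.mono' (hi2.norm.const_mul (|L|/2)⁻¹) (by fun_prop) ?_
    filter_upwards [ae_restrict_mem measurableSet_Ioo] with x hx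
    have hs : 0 < Real.sin x := sin_pos_of_pos_of_lt_pi hx.1 (hx.2.trans_le (min_le_right _ _))
    have hsx : Real.sin x ≤ x := sin_le hx.1.le
    have hh : |L|/2 < |h x| := hd' ⟨hx.1, hx.2.trans_le (min_le_left _ _)⟩
    rw [Real.norm_eq_abs, Real.norm_eq_abs, abs_div, abs_of_pos hs, abs_of_pos (inv_pos.2 hx.1),
      inv_mul_eq_div, div_div, le_div_iff₀ (by positivity), inv_mul_eq_div, div_le_iff₀ hx.1]
    exact mul_le_mul hh.le hsx hs.le (abs_nonneg _) |>.trans' (by rw [mul_comm])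
  rw [intervalIntegrable_inv_iff] at this
  rcases this with h | h
  · exact he.ne h
  · exact h left_mem_uIcc

lemma end_pi (h : ℝ → ℝ) (L : ℝ) (hL : Tendsto h (nhdsWithin π (Iio π)) (nhds L))
    (hi : IntervalIntegrable (fun x => h x / Real.sin x) volume 0 π) : L = 0 := by
  apply end_zero (fun x => h (π - x)) L
  · apply hL.comp
    apply tendsto_nhdsWithin_of_tendsto_nhds_of_eventually_within
    · have : Continuous fun x : ℝ => π - x := by fun_prop
      simpa using (this.tendsto 0).mono_left nhdsWithin_le_nhds
    · filter_upwards [self_mem_nhdsWithin] with x hx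
      simpa using hx
  · simpa using (hi.comp_sub_left π).symm

lemma radial_ineq (ν : ℝ) (f : ℝ → ℂ)
    (hf : ∀ x ∈ Ioo 0 π, DifferentiableAt ℝ f x)
    (ha : IntegrableOn (fun x => ‖deriv f x‖ ^ 2 * Real.sin x) (Ioo 0 π))
    (hc : IntegrableOn (fun x => ‖f x‖ ^ 2 / Real.sin x) (Ioo 0 π))
    (hd : IntegrableOn (fun x => ‖f x‖ ^ 2 * Real.sin x) (Ioo 0 π)) :
    ν * (ν + 1) * ∫ x in Ioo 0 π, ‖f x‖ ^ 2 * Real.sin x ≤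
      (∫ x in Ioo 0 π, ‖deriv f x‖ ^ 2 * Real.sin x) +
        ν ^ 2 * ∫ x in Ioo 0 π, ‖f x‖ ^ 2 / Real.sin x := by
  have hfc : ContinuousOn f (Ioo 0 π) := fun x hx => (hf x hx).continuousAt.continuousWithinAt
  set G : ℝ → ℝ := fun x => Real.cos x * ‖f x‖ ^ 2 with hG
  set G' : ℝ → ℝ := fun x => -Real.sin x * ‖f x‖ ^ 2 + Real.cos x * (2 * inner ℝ (f x) (deriv f x)) with hG'
  have hGd : ∀ x ∈ Ioo 0 π, HasDerivAt G (G' x) x := fun x hx =>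
    (Real.hasDerivAt_cos x).mul (hf x hx).hasDerivAt.norm_sq
  have hfm : AEStronglyMeasurable f (volume.restrict (Ioo 0 π)) :=
    hfc.aestronglyMeasurable measurableSet_Ioo
  have hdm : AEStronglyMeasurable (deriv f) (volume.restrict (Ioo 0 π)) :=
    (measurable_deriv f).aestronglyMeasurable
  have hGi : IntegrableOn G' (Ioo 0 π) := by
    refine Integrable.mono' ((hd.add ha).add hc) ?_ ?_
    · apply AEStronglyMeasurable.add
      · exact (Real.continuous_sin.neg.aestronglyMeasurable).mul (hfm.norm.pow 2)
      · exact (Real.continuous_cos.aestronglyMeasurable).mul ((hfm.inner hdm).const_mul 2)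
    · filter_upwards [ae_restrict_mem measurableSet_Ioo] with x hx
      have hs : 0 < Real.sin x := sin_pos_of_pos_of_lt_pi hx.1 hx.2
      have h1 := abs_real_inner_le_norm (f x) (deriv f x)
      have h2 := abs_cos_le_one x
      simp only [hG', Pi.add_apply]
      refine (norm_add_le _ _).trans ?_
      rw [Real.norm_eq_abs, Real.norm_eq_abs, abs_mul, abs_mul, abs_neg, abs_of_pos hs, abs_mul,
        abs_of_pos (two_pos (α := ℝ)), abs_of_nonneg (sq_nonneg ‖f x‖)]
      have h3 : |Real.cos x| * (2 * |inner ℝ (f x) (deriv f x)|) ≤ 1 * (2 * (‖f x‖ * ‖deriv f x‖)) := by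
        gcongr
      have h4 : 2 * (‖f x‖ * ‖deriv f x‖) ≤ ‖deriv f x‖^2 * Real.sin x + ‖f x‖^2 / Real.sin x := by
        have : ‖deriv f x‖^2 * Real.sin x + ‖f x‖^2 / Real.sin x - 2 * (‖f x‖ * ‖deriv f x‖)
          = (‖deriv f x‖ * Real.sin x - ‖f x‖)^2 / Real.sin x := by field_simp; ring
        have : 0 ≤ (‖deriv f x‖ * Real.sin x - ‖f x‖)^2 / Real.sin x := by positivity
        linarith
      linarith
  have hGii : IntervalIntegrable G' volume 0 π := by
    rwa [intervalIntegrable_iff_integrableOn_Ioo_of_le pi_pos.le]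
  set P : ℝ → ℝ := fun x => G (π/2) + ∫ t in (π/2)..x, G' t with hP
  have hpi2 : π / 2 ∈ Ioo 0 π := ⟨by positivity, by linarith [pi_pos]⟩
  have hPc : ContinuousOn P (Icc 0 π) := by
    rw [← uIcc_of_le pi_pos.le]
    exact continuousOn_const.add (intervalIntegral.continuousOn_primitive_interval' hGii
      (by rw [uIcc_of_le pi_pos.le]; exact Ioo_subset_Icc_self hpi2))
  have hPG : ∀ x ∈ Ioo 0 π, P x = G x := by
    intro x hx
    have hsub : uIcc (π/2) x ⊆ Ioo 0 π := (ordConnected_Ioo).uIcc_subset hpi2 hx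
    have := intervalIntegral.integral_eq_sub_of_hasDerivAt (fun y hy => hGd y (hsub hy))
      (hGii.mono_set (by rw [uIcc_of_le pi_pos.le]; exact hsub.trans Ioo_subset_Icc_self))
    simp only [hP, this]; ring
  have hl0 : Tendsto G (nhdsWithin 0 (Ioi 0)) (nhds (P 0)) := by
    have := (hPc 0 (left_mem_Icc.2 pi_pos.le)).mono Ioo_subset_Icc_self
    rw [ContinuousWithinAt, nhdsWithin_Ioo_eq_nhdsGT pi_pos] at this
    refine this.congr' ?_
    filter_upwards [Ioo_mem_nhdsGT pi_pos] with x hx using hPG x hx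
  have hlpi : Tendsto G (nhdsWithin π (Iio π)) (nhds (P π)) := by
    have := (hPc π (right_mem_Icc.2 pi_pos.le)).mono Ioo_subset_Icc_self
    rw [ContinuousWithinAt, nhdsWithin_Ioo_eq_nhdsLT pi_pos] at this
    refine this.congr' ?_
    filter_upwards [Ioo_mem_nhdsLT pi_pos] with x hx using hPG x hx
  have hGs : IntervalIntegrable (fun x => G x / Real.sin x) volume 0 π := by
    rw [intervalIntegrable_iff_integrableOn_Ioo_of_le pi_pos.le]
    have : IntegrableOn (fun x => Real.cos x * (‖f x‖ ^ 2 / Real.sin x)) (Ioo 0 π) :=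
      Integrable.bdd_mul hc (Real.continuous_cos.aestronglyMeasurable)
        (Eventually.of_forall fun x => abs_cos_le_one x)
    simpa only [hG, mul_div_assoc] using this
  have e0 := end_zero G _ hl0 hGs
  have e1 := end_pi G _ hlpi hGs
  have hint : ∫ x in Ioo 0 π, G' x = 0 := by
    have := intervalIntegral.integral_eq_sub_of_hasDerivAt_of_tendsto pi_pos hGd hGii hl0 hlpi
    rw [intervalIntegral.integral_of_le pi_pos.le, integral_Ioc_eq_integral_Ioo, e0, e1] at this
    simpa using this
  have key : ∫ x in Ioo 0 π, (ν * (ν + 1) * (‖f x‖ ^ 2 * Real.sin x) + ν * G' x) ≤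
      ∫ x in Ioo 0 π, (‖deriv f x‖ ^ 2 * Real.sin x + ν ^ 2 * (‖f x‖ ^ 2 / Real.sin x)) := by
    apply setIntegral_mono_on ((hd.const_mul _).add (hGi.const_mul _)) (ha.add (hc.const_mul _))
      measurableSet_Ioo
    intro x hx
    have hs : 0 < Real.sin x := sin_pos_of_pos_of_lt_pi hx.1 hx.2
    have h1 := norm_sub_sq_real (Real.sin x • deriv f x) ((ν * Real.cos x) • f x)
    rw [norm_smul, norm_smul, inner_smul_left, inner_smul_right, mul_pow, mul_pow,
      Real.norm_eq_abs, Real.norm_eq_abs, sq_abs, sq_abs, real_inner_comm] at h1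
    simp only [conj_trivial] at h1
    have h2 : ‖deriv f x‖ ^ 2 * Real.sin x + ν ^ 2 * (‖f x‖ ^ 2 / Real.sin x)
       - (ν * (ν + 1) * (‖f x‖ ^ 2 * Real.sin x) + ν * G' x)
       = ‖Real.sin x • deriv f x - (ν * Real.cos x) • f x‖^2 / Real.sin x := by
      rw [h1]
      simp only [hG']
      have := Real.sin_sq_add_cos_sq x
      have h5 : Real.cos x ^ 2 = 1 - Real.sin x ^2 := by linarith
      field_simp
      rw [h5]
      ring
    have h3 : 0 ≤ ‖Real.sin x • deriv f x - (ν * Real.cos x) • f x‖^2 / Real.sin x := by positivity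
    simp only [Pi.add_apply]
    linarith
  rw [integral_add (hd.const_mul _) (hGi.const_mul _), integral_add ha (hc.const_mul _),
    integral_const_mul, integral_const_mul, integral_const_mul, hint] at key
  linarith

lemma energy_ineq (ν : ℝ) (hν : ν ∈ Ioc (0:ℝ) (1/2)) (u : ℝ → ℝ → ℂ)
    (hu : MagAdmissible π ν u) :
    ν * (ν + 1) * ∫ p in Ioo (0:ℝ) π ×ˢ Ioo (0:ℝ) (2 * π), ‖u p.1 p.2‖ ^ 2 * Real.sin p.1 ≤
    ∫ p in Ioo (0:ℝ) π ×ˢ Ioo (0:ℝ) (2 * π), magEnergyIntegrand ν u p := by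
  obtain ⟨hsm, hper, -, hE, hd⟩ := hu
  have hν0 : 0 < ν := hν.1
  set T : Set (ℝ × ℝ) := Ioo 0 π ×ˢ (univ : Set ℝ) with hT
  have hTo : IsOpen T := isOpen_Ioo.prod isOpen_univ
  set S : Set (ℝ × ℝ) := Ioo 0 π ×ˢ Ioo 0 (2 * π) with hS
  have hSm : MeasurableSet S := measurableSet_Ioo.prod measurableSet_Ioo
  have hST : S ⊆ T := prod_mono le_rfl (subset_univ _)
  set D := fderiv ℝ (Function.uncurry u) with hD
  have hDc : ContinuousOn D T := hsm.continuousOn_fderiv_of_isOpen hTo (by simp)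
  have hUc : ContinuousOn (Function.uncurry u) T := hsm.continuousOn
  have hdiff : ∀ p ∈ T, HasFDerivAt (Function.uncurry u) (D p) p := fun p hp =>
    ((hsm.differentiableOn (by simp) p hp).differentiableAt (hTo.mem_nhds hp)).hasFDerivAt
  have hr : ∀ r ∈ Ioo 0 π, ∀ t, HasDerivAt (fun s => u s t) (D (r, t) (1, 0)) r := by
    intro r hr t
    exact (hdiff (r, t) ⟨hr, mem_univ _⟩).comp_hasDerivAt r
      ((hasDerivAt_id r).prodMk (hasDerivAt_const r t))
  have ht : ∀ r ∈ Ioo 0 π, ∀ t, HasDerivAt (fun s => u r s) (D (r, t) (0, 1)) t := by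
    intro r hr t
    exact (hdiff (r, t) ⟨hr, mem_univ _⟩).comp_hasDerivAt t
      ((hasDerivAt_const t r).prodMk (hasDerivAt_id t))
  have hsinc : ContinuousOn (fun p : ℝ × ℝ => Real.sin p.1) T := by fun_prop
  have hsin : ∀ p ∈ T, 0 < Real.sin p.1 := fun p hp => sin_pos_of_pos_of_lt_pi hp.1.1 hp.1.2
  set a : ℝ × ℝ → ℝ := fun p => ‖D p (1, 0)‖ ^ 2 * Real.sin p.1 with ha
  set b : ℝ × ℝ → ℝ := fun p =>
    ‖D p (0, 1) - Complex.I * (ν : ℂ) * Function.uncurry u p‖ ^ 2 / Real.sin p.1 with hb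
  set c : ℝ × ℝ → ℝ := fun p => ‖Function.uncurry u p‖ ^ 2 / Real.sin p.1 with hc
  set d : ℝ × ℝ → ℝ := fun p => ‖u p.1 p.2‖ ^ 2 * Real.sin p.1 with hd'
  have hD0 : ContinuousOn (fun p => D p (1, 0)) T := hDc.clm_apply continuousOn_const
  have hD1 : ContinuousOn (fun p => D p (0, 1)) T := hDc.clm_apply continuousOn_const
  have hac : ContinuousOn a T := (hD0.norm.pow 2).mul hsinc
  have hbc : ContinuousOn b T :=
    ((hD1.sub (continuousOn_const.mul hUc)).norm.pow 2).div hsinc fun p hp => (hsin p hp).ne'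
  have hcc : ContinuousOn c T := (hUc.norm.pow 2).div hsinc fun p hp => (hsin p hp).ne'
  have hEq : ∀ p ∈ S, magEnergyIntegrand ν u p = a p + b p := by
    rintro ⟨r, t⟩ hp
    have h0 := (hsin _ (hST hp)).ne'
    simp only [magEnergyIntegrand, (hr r hp.1 t).deriv, (ht r hp.1 t).deriv, ha, hb,
      Function.uncurry_apply_pair] at h0 ⊢
    field_simp
  have hab : IntegrableOn (fun p => a p + b p) S := hE.congr_fun hEq hSm
  have ha0 : ∀ p ∈ S, 0 ≤ a p := fun p hp => by have := hsin p (hST hp); positivity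
  have hb0 : ∀ p ∈ S, 0 ≤ b p := fun p hp => by have := hsin p (hST hp); positivity
  have hc0 : ∀ p ∈ S, 0 ≤ c p := fun p hp => by have := hsin p (hST hp); positivity
  have hai : IntegrableOn a S := by
    refine Integrable.mono' hab ((hac.mono hST).aestronglyMeasurable hSm) ?_
    filter_upwards [ae_restrict_mem hSm] with p hp
    rw [Real.norm_of_nonneg (ha0 p hp)]
    linarith [hb0 p hp]
  have hbi : IntegrableOn b S := by
    refine Integrable.mono' hab ((hbc.mono hST).aestronglyMeasurable hSm) ?_
    filter_upwards [ae_restrict_mem hSm] with p hp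
    rw [Real.norm_of_nonneg (hb0 p hp)]
    linarith [ha0 p hp]
  have hvol : (volume : Measure (ℝ × ℝ)).restrict S =
      (volume.restrict (Ioo 0 π)).prod (volume.restrict (Ioo 0 (2 * π))) := by
    rw [Measure.prod_restrict]; rfl
  have h2pi : (0:ℝ) ≤ 2 * π := by positivity
  have hline : ∀ r ∈ Ioo 0 π, Continuous fun t : ℝ => Function.uncurry u (r, t) := by
    intro r hr
    exact hUc.comp_continuous (by fun_prop) fun t => ⟨hr, mem_univ _⟩
  -- angular inequality
  have hang : ∀ r ∈ Ioo 0 π, ν ^ 2 * ∫ t in Ioo 0 (2 * π), c (r, t) ≤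
      ∫ t in Ioo 0 (2 * π), b (r, t) := by
    intro r hr
    have h0 : 0 < Real.sin r := sin_pos_of_pos_of_lt_pi hr.1 hr.2
    have h1 := fourier_ineq ν hν (fun t => u r t) (fun t => D (r, t) (0, 1)) (ht r hr)
      (hD1.comp_continuous (by fun_prop) fun t => ⟨hr, mem_univ _⟩)
      (by simpa using hper r 0)
    rw [intervalIntegral.integral_of_le h2pi, intervalIntegral.integral_of_le h2pi,
      integral_Ioc_eq_integral_Ioo, integral_Ioc_eq_integral_Ioo] at h1
    simp only [hc, hb, Function.uncurry_apply_pair]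
    rw [integral_div, integral_div, ← mul_div_assoc]
    gcongr
  have hci : IntegrableOn c S := by
    have hm : AEStronglyMeasurable c (volume.restrict S) :=
      (hcc.mono hST).aestronglyMeasurable hSm
    rw [hvol] at hm
    rw [IntegrableOn, hvol] at hbi ⊢
    rw [integrable_prod_iff hm]
    constructor
    · filter_upwards [ae_restrict_mem measurableSet_Ioo] with r hr
      have : Continuous fun t : ℝ => c (r, t) := by
        have h := ((hline r hr).norm.pow 2).div_const (Real.sin r)
        exact h
      exact this.integrableOn_Ioc.mono_set Ioo_subset_Ioc_self
    · refine Integrable.mono' (hbi.integral_prod_left.const_mul (ν ^ 2)⁻¹)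
        hm.norm.integral_prod_right' ?_
      filter_upwards [ae_restrict_mem measurableSet_Ioo] with r hr
      have h1 := hang r hr
      have h2 : ∫ t in Ioo 0 (2 * π), ‖c (r, t)‖ = ∫ t in Ioo 0 (2 * π), c (r, t) :=
        setIntegral_congr_fun measurableSet_Ioo fun t ht =>
          Real.norm_of_nonneg (hc0 (r, t) ⟨hr, ht⟩)
      rw [h2, Real.norm_of_nonneg (setIntegral_nonneg measurableSet_Ioo
        fun t ht => hc0 (r, t) ⟨hr, ht⟩), inv_mul_eq_div, le_div_iff₀ (by positivity)]
      linarith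
  have hcb : ν ^ 2 * ∫ p in S, c p ≤ ∫ p in S, b p := by
    rw [IntegrableOn, hvol] at hci hbi
    rw [hvol]
    rw [integral_prod _ hci, integral_prod _ hbi, ← integral_const_mul]
    refine integral_mono_ae (hci.integral_prod_left.const_mul _) hbi.integral_prod_left ?_
    filter_upwards [ae_restrict_mem measurableSet_Ioo] with r hr using hang r hr
  have hrad : ν * (ν + 1) * ∫ p in S, d p ≤ (∫ p in S, a p) + ν ^ 2 * ∫ p in S, c p := by
    rw [IntegrableOn, hvol] at hd hai hci
    rw [hvol]
    rw [integral_prod_symm _ hd, integral_prod_symm _ hai, integral_prod_symm _ hci,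
      ← integral_const_mul, ← integral_const_mul,
      ← integral_add hai.integral_prod_right (hci.integral_prod_right.const_mul _)]
    refine integral_mono_ae (hd.integral_prod_right.const_mul _)
      (hai.integral_prod_right.add (hci.integral_prod_right.const_mul _)) ?_
    filter_upwards [hd.prod_left_ae, hai.prod_left_ae, hci.prod_left_ae] with t h1 h2 h3
    have h4 : ∀ r ∈ Ioo 0 π, a (r, t) = ‖deriv (fun s => u s t) r‖ ^ 2 * Real.sin r := by
      intro r hr'
      simp only [ha, (hr r hr' t).deriv]
    have h5 := radial_ineq ν (fun s => u s t) (fun r hr' => (hr r hr' t).differentiableAt)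
      (IntegrableOn.congr_fun h2 h4 measurableSet_Ioo) h3 h1
    rw [← setIntegral_congr_fun measurableSet_Ioo h4] at h5
    exact h5
  rw [setIntegral_congr_fun hSm hEq, integral_add hai hbi]
  linarith

lemma norm_pos_of_adm (ν : ℝ) (u : ℝ → ℝ → ℂ) (hu : MagAdmissible π ν u) :
    0 < ∫ p in Ioo (0:ℝ) π ×ˢ Ioo (0:ℝ) (2 * π), ‖u p.1 p.2‖ ^ 2 * Real.sin p.1 := by
  obtain ⟨hsm, hper, hne, -, hd⟩ := hu
  have hSo : IsOpen (Ioo (0:ℝ) π ×ˢ Ioo (0:ℝ) (2 * π)) := isOpen_Ioo.prod isOpen_Ioo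
  have hSm := hSo.measurableSet
  have hUc : ContinuousOn (Function.uncurry u) (Ioo 0 π ×ˢ (univ : Set ℝ)) := hsm.continuousOn
  have hnn : 0 ≤ᵐ[volume.restrict (Ioo (0:ℝ) π ×ˢ Ioo (0:ℝ) (2 * π))]
      fun p : ℝ × ℝ => ‖u p.1 p.2‖ ^ 2 * Real.sin p.1 := by
    filter_upwards [ae_restrict_mem hSm] with p hp
    have := sin_pos_of_pos_of_lt_pi hp.1.1 hp.1.2
    simp only [Pi.zero_apply]
    positivity
  refine lt_of_le_of_ne (integral_nonneg_of_ae hnn) fun h => hne ?_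
  have h1 := (integral_eq_zero_iff_of_nonneg_ae hnn hd).1 h.symm
  have h2 : EqOn (fun p : ℝ × ℝ => ‖u p.1 p.2‖ ^ 2 * Real.sin p.1) 0
      (Ioo (0:ℝ) π ×ˢ Ioo (0:ℝ) (2 * π)) := by
    refine Measure.eqOn_open_of_ae_eq h1 hSo ?_ continuousOn_const
    exact ((hUc.mono (prod_mono le_rfl (subset_univ _))).norm.pow 2).mul (by fun_prop)
  intro r hr
  have hcr : Continuous fun t : ℝ => u r t :=
    hUc.comp_continuous (f := fun t : ℝ => (r, t)) (by fun_prop) fun t => ⟨hr, mem_univ _⟩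
  have h2pi : (0:ℝ) < 2 * π := by positivity
  have h3 : EqOn (fun t => u r t) (fun _ => 0) (Icc 0 (2 * π)) := by
    have : EqOn (fun t => u r t) (fun _ => 0) (Ioo 0 (2 * π)) := by
      intro t ht
      have h4 := h2 (show (r, t) ∈ _ from ⟨hr, ht⟩)
      have := sin_pos_of_pos_of_lt_pi hr.1 hr.2
      simpa [this.ne'] using h4
    have := this.closure hcr continuous_const
    rwa [closure_Ioo h2pi.ne] at this
  intro t
  have hp : Function.Periodic (fun t => u r t) (2 * π) := hper r
  obtain ⟨y, hy, he⟩ := hp.exists_mem_Ico₀ h2pi t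
  exact he.trans (h3 (Ico_subset_Icc_self hy))

lemma sin_facts (ν : ℝ) (hν : ν ∈ Ioc (0:ℝ) (1/2)) :
    IntegrableOn (fun r => Real.sin r ^ (2 * ν - 1)) (Ioo 0 π) ∧
    IntegrableOn (fun r => Real.sin r ^ (2 * ν + 1)) (Ioo 0 π) ∧
    ∫ r in Ioo 0 π, ν ^ 2 * (2 * Real.sin r ^ (2 * ν - 1) - Real.sin r ^ (2 * ν + 1)) =
      ν * (ν + 1) * ∫ r in Ioo 0 π, Real.sin r ^ (2 * ν + 1) := by
  obtain ⟨h0, h1⟩ := hν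
  have hcp : Continuous fun r : ℝ => Real.sin r ^ (2 * ν + 1) :=
    Real.continuous_sin.rpow_const fun x => Or.inr (by linarith)
  have hpi : IntegrableOn (fun r => Real.sin r ^ (2 * ν + 1)) (Ioo 0 π) :=
    hcp.integrableOn_Ioc.mono_set Ioo_subset_Ioc_self
  set H : ℝ → ℝ := fun r => Real.cos r * Real.sin r ^ (2 * ν) with hH
  set H' : ℝ → ℝ := fun r => 2 * ν * Real.sin r ^ (2 * ν - 1)
    - (2 * ν + 1) * Real.sin r ^ (2 * ν + 1) with hH'
  have hHc : Continuous H := Real.continuous_cos.mul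
    (Real.continuous_sin.rpow_const fun x => Or.inr (by linarith))
  have hrel : ∀ r ∈ Ioo 0 π, Real.sin r ^ (2 * ν + 1) = Real.sin r ^ (2 * ν - 1) * Real.sin r ^ 2 := by
    intro r hr
    have hs := sin_pos_of_pos_of_lt_pi hr.1 hr.2
    rw [← Real.rpow_natCast, ← Real.rpow_add hs]; norm_num; ring_nf
  have hHd : ∀ r ∈ Ioo 0 π, HasDerivAt H (H' r) r := by
    intro r hr
    have hs := sin_pos_of_pos_of_lt_pi hr.1 hr.2
    have := (Real.hasDerivAt_cos r).mul ((Real.hasDerivAt_sin r).rpow_const (p := 2 * ν) (Or.inl hs.ne'))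
    convert! this using 1
    simp only [hH']
    have h2 : Real.sin r * Real.sin r ^ (2 * ν) = Real.sin r ^ (2 * ν + 1) := by
      rw [Real.rpow_add_one hs.ne']; ring
    have h3 : Real.cos r ^ 2 = 1 - Real.sin r ^ 2 := by linarith [Real.sin_sq_add_cos_sq r]
    have h4 := hrel r hr
    have : -Real.sin r * Real.sin r ^ (2 * ν) + Real.cos r * (Real.cos r * (2 * ν) * Real.sin r ^ (2 * ν - 1))
      = - Real.sin r ^ (2 * ν + 1) + 2 * ν * (Real.sin r ^ (2 * ν - 1) * Real.cos r ^ 2) := by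
      rw [← h2]; ring
    rw [this, h3, mul_sub, ← h4]; ring
  have hKi : IntegrableOn (fun r => 1 + H' r) (Ioo 0 π) := by
    refine (intervalIntegral.integrableOn_deriv_of_nonneg (g := fun r => r + H r) (by fun_prop)
      (fun r hr => (hasDerivAt_id r).add (hHd r hr)) ?_).mono_set Ioo_subset_Ioc_self
    intro r hr
    have hs := sin_pos_of_pos_of_lt_pi hr.1 hr.2
    have h4 := hrel r hr
    have h5 : Real.sin r ^ (2 * ν + 1) ≤ 1 := Real.rpow_le_one hs.le (sin_le_one r) (by linarith)
    have h6 : 0 < Real.sin r ^ (2 * ν - 1) := Real.rpow_pos_of_pos hs _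
    have h7 : Real.sin r ^ 2 ≤ 1 := sin_sq_le_one r
    have h8 : Real.sin r ^ (2 * ν + 1) ≤ Real.sin r ^ (2 * ν - 1) := by rw [h4]; nlinarith
    simp only [hH']
    nlinarith
  have hH'i : IntegrableOn H' (Ioo 0 π) := by
    have : IntegrableOn (fun _ : ℝ => (1:ℝ)) (Ioo 0 π) := by simp
    refine (hKi.sub this).congr (Eventually.of_forall fun r => ?_)
    simp
  have hm : IntegrableOn (fun r => Real.sin r ^ (2 * ν - 1)) (Ioo 0 π) := by
    refine ((hH'i.add (hpi.const_mul (2 * ν + 1))).const_mul (2 * ν)⁻¹).congr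
      (Eventually.of_forall fun r => ?_)
    simp only [Pi.add_apply, hH']
    field_simp
    ring
  refine ⟨hm, hpi, ?_⟩
  have hz : ∫ r in Ioo 0 π, H' r = 0 := by
    have := intervalIntegral.integral_eq_sub_of_hasDerivAt_of_le pi_pos.le hHc.continuousOn hHd
      (by rwa [intervalIntegrable_iff_integrableOn_Ioo_of_le pi_pos.le])
    rw [intervalIntegral.integral_of_le pi_pos.le, integral_Ioc_eq_integral_Ioo] at this
    rw [this]
    simp [hH, Real.zero_rpow (show 2 * ν ≠ 0 by positivity)]
  have : ∀ r, ν ^ 2 * (2 * Real.sin r ^ (2 * ν - 1) - Real.sin r ^ (2 * ν + 1)) =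
      ν * H' r + ν * (ν + 1) * Real.sin r ^ (2 * ν + 1) := by
    intro r; simp only [hH']; ring
  simp_rw [this]
  rw [integral_add (hH'i.const_mul _) (hpi.const_mul _), integral_const_mul, integral_const_mul, hz]
  simp

lemma sin_rpow_adm (ν : ℝ) (hν : ν ∈ Ioc (0:ℝ) (1/2)) :
    MagAdmissible π ν (fun r _ => ((Real.sin r ^ ν : ℝ) : ℂ)) ∧
    magQuot π ν (fun r _ => ((Real.sin r ^ ν : ℝ) : ℂ)) = ν * (ν + 1) := by
  obtain ⟨hm, hp, hint⟩ := sin_facts ν hν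
  set u : ℝ → ℝ → ℂ := fun r _ => ((Real.sin r ^ ν : ℝ) : ℂ) with hu
  have hSm : MeasurableSet (Ioo (0:ℝ) π ×ˢ Ioo (0:ℝ) (2 * π)) :=
    measurableSet_Ioo.prod measurableSet_Ioo
  have hvol : (volume : Measure (ℝ × ℝ)).restrict (Ioo (0:ℝ) π ×ˢ Ioo (0:ℝ) (2 * π)) =
      (volume.restrict (Ioo 0 π)).prod (volume.restrict (Ioo 0 (2 * π))) := by
    rw [Measure.prod_restrict]; rfl
  have hEq : ∀ p ∈ Ioo (0:ℝ) π ×ˢ Ioo (0:ℝ) (2 * π), magEnergyIntegrand ν u p =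
      ν ^ 2 * (2 * Real.sin p.1 ^ (2 * ν - 1) - Real.sin p.1 ^ (2 * ν + 1)) := by
    rintro ⟨r, t⟩ hpt
    have hs := sin_pos_of_pos_of_lt_pi hpt.1.1 hpt.1.2
    have hder : HasDerivAt (fun s => ((Real.sin s ^ ν : ℝ) : ℂ))
        ((Real.cos r * ν * Real.sin r ^ (ν - 1) : ℝ) : ℂ) r :=
      ((Real.hasDerivAt_sin r).rpow_const (Or.inl hs.ne')).ofReal_comp
    simp only [magEnergyIntegrand, hu, hder.deriv, deriv_const, zero_sub, norm_neg, norm_mul,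
      Complex.norm_I, Complex.norm_real, Real.norm_eq_abs, one_mul, mul_pow, sq_abs]
    have e1 : Real.sin r ^ (ν - 1) = Real.sin r ^ ν / Real.sin r := Real.rpow_sub_one hs.ne' _
    have e2 : Real.sin r ^ (2 * ν - 1) = (Real.sin r ^ ν) ^ 2 / Real.sin r := by
      rw [Real.rpow_sub_one hs.ne', mul_comm, Real.rpow_mul hs.le, Real.rpow_two]
    have e3 : Real.sin r ^ (2 * ν + 1) = (Real.sin r ^ ν) ^ 2 * Real.sin r := by
      rw [Real.rpow_add_one hs.ne', mul_comm 2, Real.rpow_mul hs.le, Real.rpow_two]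
    have h3 : Real.cos r ^ 2 = 1 - Real.sin r ^ 2 := by linarith [Real.sin_sq_add_cos_sq r]
    rw [e1, e2, e3, h3]
    field_simp
    ring
  have hEq2 : ∀ p ∈ Ioo (0:ℝ) π ×ˢ Ioo (0:ℝ) (2 * π), ‖u p.1 p.2‖ ^ 2 * Real.sin p.1 =
      Real.sin p.1 ^ (2 * ν + 1) := by
    rintro ⟨r, t⟩ hpt
    have hs := sin_pos_of_pos_of_lt_pi hpt.1.1 hpt.1.2
    simp only [hu, Complex.norm_real, Real.norm_eq_abs, sq_abs]
    rw [Real.rpow_add_one hs.ne', mul_comm 2, Real.rpow_mul hs.le, Real.rpow_two]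
  have hfin : ∀ g : ℝ → ℝ, IntegrableOn g (Ioo 0 π) →
      IntegrableOn (fun p : ℝ × ℝ => g p.1) (Ioo (0:ℝ) π ×ˢ Ioo (0:ℝ) (2 * π)) := by
    intro g hg
    rw [IntegrableOn, hvol]
    exact Integrable.comp_fst hg _
  have hval : ∀ g : ℝ → ℝ, ∫ p in Ioo (0:ℝ) π ×ˢ Ioo (0:ℝ) (2 * π), g p.1 =
      2 * π * ∫ r in Ioo 0 π, g r := by
    intro g
    rw [hvol, integral_fun_fst]
    simp [Real.pi_pos.le]
  have hadm : MagAdmissible π ν u := by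
    refine ⟨?_, fun _ _ => rfl, ?_, ?_, ?_⟩
    · intro p hp
      have hs := sin_pos_of_pos_of_lt_pi hp.1.1 hp.1.2
      have h1 : ContDiffAt ℝ (⊤ : ℕ∞) (fun q : ℝ × ℝ => Real.sin q.1 ^ ν) p :=
        (Real.contDiff_sin.comp contDiff_fst).contDiffAt.rpow_const_of_ne hs.ne'
      exact (Complex.ofRealCLM.contDiff.contDiffAt.comp p h1).contDiffWithinAt
    · intro h
      have := h (π / 2) ⟨by positivity, by linarith [pi_pos]⟩ 0
      simp [hu] at this
    · exact (hfin _ (((hm.const_mul 2).sub hp).const_mul (ν ^ 2))).congr_fun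
        (fun p hp => (hEq p hp).symm) hSm
    · exact (hfin _ hp).congr_fun (fun p hp => (hEq2 p hp).symm) hSm
  refine ⟨hadm, ?_⟩
  have hpos := norm_pos_of_adm ν u hadm
  rw [magQuot, div_eq_iff hpos.ne', setIntegral_congr_fun hSm hEq, setIntegral_congr_fun hSm hEq2,
    hval (fun r => ν ^ 2 * (2 * Real.sin r ^ (2 * ν - 1) - Real.sin r ^ (2 * ν + 1))),
    hval (fun r => Real.sin r ^ (2 * ν + 1)), hint]
  ring

theorem sphere_first_AB_eigenvalue (ν : ℝ) (hν : ν ∈ Ioc (0:ℝ) (1/2)) :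
    sInf { q | ∃ u : ℝ → ℝ → ℂ, MagAdmissible π ν u ∧ q = magQuot π ν u }
        = ν * (ν + 1) ∧
    MagAdmissible π ν (fun r _ => ((Real.sin r ^ ν : ℝ) : ℂ)) ∧
    magQuot π ν (fun r _ => ((Real.sin r ^ ν : ℝ) : ℂ)) = ν * (ν + 1) := by
  obtain ⟨h1, h2⟩ := sin_rpow_adm ν hν
  refine ⟨?_, h1, h2⟩
  apply IsLeast.csInf_eq
  refine ⟨⟨_, h1, h2.symm⟩, ?_⟩
  rintro q ⟨u, hu, rfl⟩
  rw [magQuot, le_div_iff₀ (norm_pos_of_adm ν u hu)]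
  exact energy_ineq ν hν u hu
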